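/- Most permissiveness of the exact prophecy annotation: Let φ be a specification and A = (Q, q0, δ, safe(F)) a deterministic safety automaton over Σ with L(A) = L(φ), and let κ* be the exact prophecy annotation of A. Then the prophecy-annotated controller (A, κ*) is most permissive for every plant M_p ∈ ℙ: every controller M_c ∈ ℂ with M_p ∥ M_c ⊨ φ satisfies M_c ⊨ (A, κ*) ∥ M_p. -/

import Mathlib

/-- A Moore machine over atomic propositions `AP`, with input propositions `I ⊆ AP`
and output propositions `O ⊆ AP`.  Letters in `2^I` are encoded as sets `σ : Set AP`
where the transition function is invariant under intersecting with `I`, and the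
output labeling produces subsets of `O`. -/
structure Moore (AP : Type) (I O : Set AP) : Type 1 where
  S : Type
  fin : Finite S
  s0 : S
  tr : S → Set AP → S
  out : S → Set AP
  tr_inv : ∀ s σ, tr s σ = tr s (σ ∩ I)
  out_sub : ∀ s, out s ⊆ O

namespace Moore

variable {AP : Type} {I O : Set AP}

/-- `M.at' s` is `M` with initial state replaced by `s` (written `M(s)` in the paper). -/
def at' (M : Moore AP I O) (s : M.S) : Moore AP I O :=
  { M with s0 := s }

/-- The run of `M` on an infinite word `γ`: at step `j` the machine reads input `γ j ∩ I`. -/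
def run (M : Moore AP I O) (γ : ℕ → Set AP) : ℕ → M.S
  | 0 => M.s0
  | j + 1 => M.tr (M.run γ j) (γ j ∩ I)

/-- `Traces(M)`: all `γ` whose `O`-component agrees with the outputs along the run of `M`. -/
def Traces (M : Moore AP I O) : Set (ℕ → Set AP) :=
  { γ | ∀ j, γ j ∩ O = M.out (M.run γ j) }

end Moore

/-- Parallel composition `M1 ∥ M2` of Moore machines of two distinct processes. -/
def par {AP : Type} {I1 O1 I2 O2 : Set AP} (M1 : Moore AP I1 O1) (M2 : Moore AP I2 O2) :
    Moore AP ((I1 ∪ I2) \ (O1 ∪ O2)) (O1 ∪ O2) where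
  S := M1.S × M2.S
  fin := by haveI := M1.fin; haveI := M2.fin; exact inferInstance
  s0 := (M1.s0, M2.s0)
  tr p σ :=
    (M1.tr p.1 ((σ ∩ ((I1 ∪ I2) \ (O1 ∪ O2)) ∪ M2.out p.2) ∩ I1),
     M2.tr p.2 ((σ ∩ ((I1 ∪ I2) \ (O1 ∪ O2)) ∪ M1.out p.1) ∩ I2))
  out p := M1.out p.1 ∪ M2.out p.2
  tr_inv := by intro s σ; simp [Set.inter_assoc]
  out_sub p := Set.union_subset_union (M1.out_sub p.1) (M2.out_sub p.2)

/-- A deterministic safety automaton `A = (Q, q0, δ, safe(F))` over alphabet `2^AP`. -/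
structure DSA (AP : Type) : Type 1 where
  Q : Type
  fin : Finite Q
  q0 : Q
  δ : Q → Set AP → Q
  F : Set Q

namespace DSA

variable {AP : Type}

/-- The run of `A` from state `q` on the infinite word `γ`. -/
def run (A : DSA AP) (q : A.Q) (γ : ℕ → Set AP) : ℕ → A.Q
  | 0 => q
  | i + 1 => A.δ (A.run q γ i) (γ i)

/-- `L(A)`: all words whose run from `q0` stays in the safe states `F`. -/
def Lang (A : DSA AP) : Set (ℕ → Set AP) :=
  { γ | ∀ i, A.run A.q0 γ i ∈ A.F }

end DSA

/-- `Runs(A, q, M) ⊆ safe(F)`: every run of `A` from `q` on a trace of `M` stays in `F`. -/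
def SafeRuns {AP : Type} {I O : Set AP} (A : DSA AP) (q : A.Q) (M : Moore AP I O) : Prop :=
  ∀ γ ∈ M.Traces, ∀ i, A.run q γ i ∈ A.F

/-- `M_c ⊨ (A(q), κ) ∥ M_p`: the controller `M_c` is consistent with the
prophecy-annotated controller `(A(q), κ)` w.r.t. the plant `M_p`: at every
reachable triple of the product of `A` (started at `q`) with `M_c ∥ M_p`,
the residual plant satisfies the prophecy for the current controller output. -/
def Consistent {AP : Type} (Oe Oc Op : Set AP) (A : DSA AP) (q : A.Q)
    (κ : A.Q → Set AP → Set (Moore AP (Oe ∪ Oc) Op))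
    (Mc : Moore AP (Oe ∪ Op) Oc) (Mp : Moore AP (Oe ∪ Oc) Op) : Prop :=
  ∀ γ ∈ (par Mc Mp).Traces, ∀ i,
    Mp.at' ((par Mc Mp).run γ i).2 ∈
      κ (A.run q γ i) (Mc.out ((par Mc Mp).run γ i).1)

/-- `(A, κ)` is correct for the plant `M_p` w.r.t. the specification `φ`. -/
def CorrectFor {AP : Type} (Oe Oc Op : Set AP) (A : DSA AP)
    (κ : A.Q → Set AP → Set (Moore AP (Oe ∪ Oc) Op))
    (φ : Set (ℕ → Set AP)) (Mp : Moore AP (Oe ∪ Oc) Op) : Prop :=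
  ∀ Mc : Moore AP (Oe ∪ Op) Oc,
    Consistent Oe Oc Op A A.q0 κ Mc Mp → (par Mp Mc).Traces ⊆ φ

/-- `(A, κ)` is most permissive for the plant `M_p` w.r.t. the specification `φ`. -/
def MostPermissiveFor {AP : Type} (Oe Oc Op : Set AP) (A : DSA AP)
    (κ : A.Q → Set AP → Set (Moore AP (Oe ∪ Oc) Op))
    (φ : Set (ℕ → Set AP)) (Mp : Moore AP (Oe ∪ Oc) Op) : Prop :=
  ∀ Mc : Moore AP (Oe ∪ Op) Oc,
    (par Mp Mc).Traces ⊆ φ → Consistent Oe Oc Op A A.q0 κ Mc Mp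

/-- `X` is a safe controllable region of the safety game of `A` and `M_p`:
`X ⊆ F × S^p`, and from every `(q,s) ∈ X` some controller output `α ⊆ O_c`
keeps the game in `X` for every environment output `β ⊆ O_e`. -/
def WinStep {AP : Type} (Oe Oc Op : Set AP) (A : DSA AP)
    (Mp : Moore AP (Oe ∪ Oc) Op) (X : Set (A.Q × Mp.S)) : Prop :=
  (∀ p ∈ X, p.1 ∈ A.F) ∧
    ∀ p ∈ X, ∃ α ⊆ Oc, ∀ β ⊆ Oe,
      (A.δ p.1 (α ∪ β ∪ Mp.out p.2), Mp.tr p.2 (α ∪ β)) ∈ X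

/-- The winning region of the safety game of `A` and `M_p`: the largest
(safe controllable) set `X` with `WinStep`, i.e. the union of all of them. -/
def Win {AP : Type} (Oe Oc Op : Set AP) (A : DSA AP)
    (Mp : Moore AP (Oe ∪ Oc) Op) : Set (A.Q × Mp.S) :=
  ⋃₀ { X | WinStep Oe Oc Op A Mp X }

/-- The exact prophecy annotation `κ*` of `A`: all plants for which some
controller with initial output `α` keeps every run of `A` from `q` inside `F`. -/
def κStar {AP : Type} (Oe Oc Op : Set AP) (A : DSA AP) (q : A.Q) (α : Set AP) :
    Set (Moore AP (Oe ∪ Oc) Op) :=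
  { Mp | ∃ Mc : Moore AP (Oe ∪ Op) Oc, Mc.out Mc.s0 = α ∧ SafeRuns A q (par Mp Mc) }

/-- `Add_{M_p}(q, α)`: the residual plants `M_p(s)` such that `q ∈ F` and output `α`
leads into the winning region for every environment output `β ⊆ O_e`. -/
def AddSet {AP : Type} (Oe Oc Op : Set AP) (A : DSA AP)
    (Mp : Moore AP (Oe ∪ Oc) Op) (q : A.Q) (α : Set AP) :
    Set (Moore AP (Oe ∪ Oc) Op) :=
  { M | ∃ s : Mp.S, M = Mp.at' s ∧ q ∈ A.F ∧
      ∀ β ⊆ Oe, (A.δ q (α ∪ β ∪ Mp.out s), Mp.tr s (α ∪ β)) ∈ Win Oe Oc Op A Mp }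

/-- `Rem_{M_p}(q, α)`: the residual plants `M_p(s)` such that output `α` leaves the
winning region for some environment output `β ⊆ O_e`. -/
def RemSet {AP : Type} (Oe Oc Op : Set AP) (A : DSA AP)
    (Mp : Moore AP (Oe ∪ Oc) Op) (q : A.Q) (α : Set AP) :
    Set (Moore AP (Oe ∪ Oc) Op) :=
  { M | ∃ s : Mp.S, M = Mp.at' s ∧
      ∃ β ⊆ Oe, (A.δ q (α ∪ β ∪ Mp.out s), Mp.tr s (α ∪ β)) ∉ Win Oe Oc Op A Mp }

/-- The word that follows `γ` for `i` steps and then `γ'`. -/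
def spliceWord {AP : Type} (γ γ' : ℕ → Set AP) (i : ℕ) : ℕ → Set AP :=
  fun j => if j < i then γ j else γ' (j - i)

theorem spliceWord_lt {AP : Type} (γ γ' : ℕ → Set AP) {i j : ℕ} (h : j < i) :
    spliceWord γ γ' i j = γ j := by simp [spliceWord, h]

theorem spliceWord_add {AP : Type} (γ γ' : ℕ → Set AP) (i j : ℕ) :
    spliceWord γ γ' i (i + j) = γ' j := by simp [spliceWord]

theorem Moore.run_splice_le {AP : Type} {I O : Set AP} (M : Moore AP I O)
    (γ γ' : ℕ → Set AP) (i j : ℕ) (h : j ≤ i) :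
    M.run (spliceWord γ γ' i) j = M.run γ j := by
  induction j with
  | zero => rfl
  | succ j ih =>
    simp only [Moore.run]
    rw [ih (by omega), spliceWord_lt γ γ' (by omega)]

theorem Moore.run_splice_add {AP : Type} {I O : Set AP} (M : Moore AP I O)
    (γ γ' : ℕ → Set AP) (i j : ℕ) :
    M.run (spliceWord γ γ' i) (i + j) = (M.at' (M.run γ i)).run γ' j := by
  induction j with
  | zero => exact M.run_splice_le γ γ' i i le_rfl
  | succ j ih =>
    change M.tr (M.run (spliceWord γ γ' i) (i + j)) (spliceWord γ γ' i (i + j) ∩ I) = _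
    rw [ih, spliceWord_add]
    rfl

theorem DSA.run_splice_le {AP : Type} (A : DSA AP) (q : A.Q)
    (γ γ' : ℕ → Set AP) (i j : ℕ) (h : j ≤ i) :
    A.run q (spliceWord γ γ' i) j = A.run q γ j := by
  induction j with
  | zero => rfl
  | succ j ih =>
    simp only [DSA.run]
    rw [ih (by omega), spliceWord_lt γ γ' (by omega)]

theorem DSA.run_splice_add {AP : Type} (A : DSA AP) (q : A.Q)
    (γ γ' : ℕ → Set AP) (i j : ℕ) :
    A.run q (spliceWord γ γ' i) (i + j) = A.run (A.run q γ i) γ' j := by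
  induction j with
  | zero => exact A.run_splice_le q γ γ' i i le_rfl
  | succ j ih =>
    change A.δ (A.run q (spliceWord γ γ' i) (i + j)) (spliceWord γ γ' i (i + j)) = _
    rw [ih, spliceWord_add]
    rfl

theorem Moore.splice_mem {AP : Type} {I O : Set AP} (M : Moore AP I O)
    {γ γ' : ℕ → Set AP} (i : ℕ) (h : γ ∈ M.Traces)
    (h' : γ' ∈ (M.at' (M.run γ i)).Traces) : spliceWord γ γ' i ∈ M.Traces := by
  intro j
  rcases lt_or_ge j i with hj | hj
  · rw [spliceWord_lt γ γ' hj, M.run_splice_le γ γ' i j hj.le]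
    exact h j
  · obtain ⟨k, rfl⟩ := Nat.exists_eq_add_of_le hj
    rw [spliceWord_add, M.run_splice_add]
    exact h' k

theorem par_run_swap {AP : Type} {I1 O1 I2 O2 : Set AP} (M1 : Moore AP I1 O1)
    (M2 : Moore AP I2 O2) (γ : ℕ → Set AP) (j : ℕ) :
    (par M2 M1).run γ j = (((par M1 M2).run γ j).2, ((par M1 M2).run γ j).1) := by
  induction j with
  | zero => rfl
  | succ j ih =>
    simp only [Moore.run]
    rw [ih]
    simp only [par]
    rw [Set.union_comm I2 I1, Set.union_comm O2 O1]

theorem par_traces_swap {AP : Type} {I1 O1 I2 O2 : Set AP} (M1 : Moore AP I1 O1)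
    (M2 : Moore AP I2 O2) {γ : ℕ → Set AP} (h : γ ∈ (par M1 M2).Traces) :
    γ ∈ (par M2 M1).Traces := by
  intro j
  rw [par_run_swap M1 M2]
  have e : γ j ∩ (O2 ∪ O1) = γ j ∩ (O1 ∪ O2) := by rw [Set.union_comm]
  exact (e.trans (h j)).trans (Set.union_comm _ _)

/-- Most permissiveness of the exact prophecy annotation. -/
theorem κStar_most_permissive
    {AP : Type} [Finite AP] (Oe Oc Op : Set AP)
    (hec : Disjoint Oe Oc) (hep : Disjoint Oe Op) (hcp : Disjoint Oc Op)
    (hcov : Oe ∪ Oc ∪ Op = Set.univ)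
    (φ : Set (ℕ → Set AP)) (A : DSA AP) (hL : A.Lang = φ) :
    ∀ Mp : Moore AP (Oe ∪ Oc) Op,
      MostPermissiveFor Oe Oc Op A (κStar Oe Oc Op A) φ Mp := by
  intro Mp Mc hsub γ hγ i
  refine ⟨Mc.at' ((par Mc Mp).run γ i).1, rfl, ?_⟩
  intro γ' hγ' j
  have h1 := par_traces_swap Mc Mp hγ
  have h2 : γ' ∈ ((par Mp Mc).at' ((par Mp Mc).run γ i)).Traces := by
    rw [par_run_swap Mc Mp]
    exact hγ'
  have h3 := hsub ((par Mp Mc).splice_mem i h1 h2)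
  rw [← hL] at h3
  have h4 := h3 (i + j)
  rwa [A.run_splice_add] at h4
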